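/- arXiv:2312.15381 — 2 statements merged into one kernel-verified Lean document; each statement's English description precedes it below -/
import Mathlib

section
/- Fusion is unique: for every plurality zz and individuals x, y, if F zz x and F zz y then x = y. -/
/-- Components of `zz`: all objects that are one of some plurality fusing to a member of `zz`. -/
def Ucomp {α : Type*} (F : Set α → α → Prop) (zz : Set α) : Set α :=
  {u | ∃ z ∈ zz, ∃ yy, F yy z ∧ u ∈ yy}

/-- Parthood defined from fusion: `x` is part of `y` iff `y` fuses some plurality containing `x`. -/
def PartF {α : Type*} (F : Set α → α → Prop) (x y : α) : Prop :=
  ∃ zz, F zz y ∧ x ∈ zz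

/-- Overlap defined from the fusion-induced parthood. -/
def OvF {α : Type*} (F : Set α → α → Prop) (x y : α) : Prop :=
  ∃ z, PartF F z x ∧ PartF F z y

/-!
Extensionality lets any plurality fusing to `x` be exchanged for `{x}`, inside any larger plurality,
without changing the fusions. If `zz` fuses to both `x` and `y`, exchanging one copy of `zz` and
then the other in `zz ∪ zz` makes `y` a fusion of `zz ∪ {x}`, then of `{x}`, so `y = x`. The context
`uu` in `extF` is thus `zz` and then `{x}`; taking `uu = ∅` would be shorter, but would rely on the
empty plurality, which plural logic usually excludes.
-/

section

variable {α : Type*} {F : Set α → α → Prop}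

theorem fusion_singleton_self (exF : ∀ x : α, ∃ y, F {x} y) (idF : ∀ x y : α, F {y} x → x = y)
    (x : α) : F {x} x := by
  obtain ⟨w, hw⟩ := exF x
  rwa [idF w x hw] at hw

theorem fusion_singleton_of_common_plurality
    (extF : ∀ (zz yy uu : Set α) (x v : α), F zz x → F yy x → F (uu ∪ zz) v → F (uu ∪ yy) v)
    {zz : Set α} {x y : α} (hxx : F {x} x) (hx : F zz x) (hy : F zz y) : F {x} y := by
  have exchange (uu : Set α) : F (uu ∪ zz) y → F (uu ∪ {x}) y := extF zz {x} uu x y hx hxx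
  have h_union : F (zz ∪ {x}) y := exchange zz (by rwa [Set.union_self])
  have h_singleton : F ({x} ∪ {x}) y := exchange {x} (by rwa [Set.union_comm])
  rwa [Set.union_self] at h_singleton

end

theorem fusion_unique_general {α : Type*} (F : Set α → α → Prop)
    (exF : ∀ x : α, ∃ y, F {x} y)
    (extF : ∀ (zz yy uu : Set α) (x v : α),
      F zz x → F yy x → F (uu ∪ zz) v → F (uu ∪ yy) v)
    (idF : ∀ x y : α, F {y} x → x = y)
    (zz : Set α) (x y : α) (hx : F zz x) (hy : F zz y) : x = y := by
  have hxx : F {x} x := fusion_singleton_self exF idF x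
  have hxy : F {x} y := fusion_singleton_of_common_plurality extF hxx hx hy
  exact (idF y x hxy).symm

theorem fusion_unique {α : Type*} (F : Set α → α → Prop)
    (exF : ∀ zz : Set α, zz.Nonempty → ∃ y, F zz y)
    (extF : ∀ (zz yy uu : Set α) (x v : α),
      F zz x → F yy x → F (uu ∪ zz) v → F (uu ∪ yy) v)
    (idF : ∀ x y : α, F {y} x → x = y)
    (compF : ∀ (zz : Set α) (x y : α), F (zz ∪ {x}) y → F zz y →
      ∃ vv, vv ⊆ Ucomp F zz ∧ F vv x ∧ vv.Nonempty)
    (wspF : ∀ x y : α, F ({x} ∪ {y}) y → x ≠ y →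
      ∃ z ∈ Ucomp F {y}, ¬ ∃ u, F (Ucomp F {x} ∩ Ucomp F {z}) u) :
    ∀ (zz : Set α) (x y : α), F zz x → F zz y → x = y := by
  exact fusion_unique_general F (fun x ↦ exF {x} (Set.singleton_nonempty x)) extF idF
end

section
/- In classical mereology, the principle of fusion extensionality holds: if F zz x, F yy x, and F (uu ∪ zz) v, then F (uu ∪ yy) v. -/
/-- Overlap: `x` and `y` share a common part. -/
def OvP {α : Type*} (P : α → α → Prop) (x y : α) : Prop :=
  ∃ z, P z x ∧ P z y

/-- Proper parthood. -/
def PPP {α : Type*} (P : α → α → Prop) (x y : α) : Prop :=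
  P x y ∧ x ≠ y

/-- Leśniewski fusion: `x` fuses `zz` iff every member of `zz` is part of `x`
and every part of `x` overlaps some member of `zz`. -/
def FusL {α : Type*} (P : α → α → Prop) (zz : Set α) (x : α) : Prop :=
  (∀ y ∈ zz, P y x) ∧ ∀ y, P y x → ∃ v ∈ zz, OvP P v y

/-- Components of `zz`: everything that is part of some member of `zz`. -/
def UP {α : Type*} (P : α → α → Prop) (zz : Set α) : Set α :=
  {u | ∃ w ∈ zz, P u w}

/-! Under strong supplementation a fusion is a least upper bound, and it overlaps exactly what some
member of the fused plurality overlaps. Hence `x` is part of `v`, and inside a larger plurality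
either of two pluralities fusing to `x` can stand for the other. Strong supplementation itself
comes from fusing pairs: if every part of `x` overlaps `v`, then a fusion of `x` and `v` is already
a fusion of `v` alone, so it is `v`. -/

/-- Strong supplementation, the extensionality principle of mereology, in contrapositive form: the
usual phrasing is that something not part of `y` has a part disjoint from `y`. -/
def StrongSupplementation {α : Type*} (P : α → α → Prop) : Prop :=
  ∀ x y, (∀ z, P z x → OvP P y z) → P x y

section

variable {α : Type*} {P : α → α → Prop} {zz : Set α} {x y z w : α}

theorem OvP.mono_left (htrans : ∀ x y z, P x y → P y z → P x z)
    (hxz : OvP P x z) (hxy : P x y) : OvP P y z :=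
  let ⟨t, htx, htz⟩ := hxz
  ⟨t, htrans t x y htx hxy, htz⟩

theorem OvP.mono_right (htrans : ∀ x y z, P x y → P y z → P x z)
    (hxy : OvP P x y) (hyz : P y z) : OvP P x z :=
  let ⟨t, htx, hty⟩ := hxy
  ⟨t, htx, htrans t y z hty hyz⟩

theorem FusL.overlap_iff (htrans : ∀ x y z, P x y → P y z → P x z) (hx : FusL P zz x) :
    OvP P x y ↔ ∃ a ∈ zz, OvP P a y := by
  constructor
  · rintro ⟨t, htx, hty⟩
    obtain ⟨a, ha, hat⟩ := hx.2 t htx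
    exact ⟨a, ha, hat.mono_right htrans hty⟩
  · rintro ⟨a, ha, hay⟩
    exact hay.mono_left htrans (hx.1 a ha)

theorem FusL.part_of_forall_part (htrans : ∀ x y z, P x y → P y z → P x z)
    (hss : StrongSupplementation P) (hx : FusL P zz x) (hy : ∀ a ∈ zz, P a y) : P x y := by
  refine hss x y fun t htx => ?_
  obtain ⟨a, ha, hat⟩ := hx.2 t htx
  exact hat.mono_left htrans (hy a ha)

theorem FusL.of_insert (htrans : ∀ x y z, P x y → P y z → P x z)
    (hw : FusL P (insert x zz) w) (hx : ∀ y, P y x → ∃ a ∈ zz, OvP P a y) : FusL P zz w := by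
  refine ⟨fun a ha => hw.1 a (Set.mem_insert_of_mem x ha), fun y hyw => ?_⟩
  obtain ⟨a, rfl | ha, hay⟩ := hw.2 y hyw
  · obtain ⟨t, hta, hty⟩ := hay
    obtain ⟨b, hb, hbt⟩ := hx t hta
    exact ⟨b, hb, hbt.mono_right htrans hty⟩
  · exact ⟨a, ha, hay⟩

theorem fusL_singleton_self (hrefl : ∀ x, P x x) (x : α) : FusL P {x} x :=
  ⟨fun _ hy => hy ▸ hrefl x, fun y hyx => ⟨x, rfl, y, hyx, hrefl y⟩⟩

theorem StrongSupplementation.of_fusL_pair (htrans : ∀ x y z, P x y → P y z → P x z)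
    (hpair : ∀ x y, ∃ w, FusL P {x, y} w) (hsingleton : ∀ x y, FusL P {x} y → y = x) :
    StrongSupplementation P := by
  intro x y hxy
  obtain ⟨w, hw⟩ := hpair x y
  have hyw : FusL P {y} w := hw.of_insert htrans fun z hzx => ⟨y, rfl, hxy z hzx⟩
  exact hsingleton y w hyw ▸ hw.1 x (Set.mem_insert x {y})

end

theorem fusion_ext_general {α : Type*} {P : α → α → Prop}
    (htrans : ∀ x y z, P x y → P y z → P x z) (hss : StrongSupplementation P)
    (zz yy uu : Set α) (x v : α)
    (hzz : FusL P zz x) (hyy : FusL P yy x) (hv : FusL P (uu ∪ zz) v) : FusL P (uu ∪ yy) v := by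
  have hxv : P x v := hzz.part_of_forall_part htrans hss fun a ha => hv.1 a (Or.inr ha)
  constructor
  · rintro a (ha | ha)
    · exact hv.1 a (Or.inl ha)
    · exact htrans a x v (hyy.1 a ha) hxv
  · intro y hyv
    obtain ⟨a, ha | ha, hay⟩ := hv.2 y hyv
    · exact ⟨a, Or.inl ha, hay⟩
    · have hxy : OvP P x y := (hzz.overlap_iff htrans).2 ⟨a, ha, hay⟩
      obtain ⟨b, hb, hby⟩ := (hyy.overlap_iff htrans).1 hxy
      exact ⟨b, Or.inr hb, hby⟩

theorem fusion_ext {α : Type*} (P : α → α → Prop)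
    (hrefl : ∀ x : α, P x x)
    (hanti : ∀ x y : α, P x y → P y x → x = y)
    (htrans : ∀ x y z : α, P x y → P y z → P x z)
    (hex : ∀ zz : Set α, zz.Nonempty → ∃ x, FusL P zz x)
    (huniq : ∀ (zz : Set α) (x y : α), FusL P zz x → FusL P zz y → x = y) :
    ∀ (zz yy uu : Set α) (x v : α),
      FusL P zz x → FusL P yy x → FusL P (uu ∪ zz) v → FusL P (uu ∪ yy) v := by
  have hss : StrongSupplementation P :=
    .of_fusL_pair htrans (fun x y => hex {x, y} (Set.insert_nonempty x {y}))
      fun x y hy => huniq {x} y x hy (fusL_singleton_self hrefl x)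
  exact fusion_ext_general htrans hss
end
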